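/- Let q := |det A| ≥ 2, let 𝔇 be a digit set for B, and let Φ = {φ₀,…,φ_{q−1}} ⊆ ℓ²(ℤ_N²). Then 𝔅(Φ) = {T_{Āk} φ_p : k ∈ 𝔇, 0 ≤ p ≤ q−1} is an orthonormal basis of ℓ²(ℤ_N²) if and only if for every k ∈ (ℤ/Nℤ)² and every pair (p₁,p₂) with 0 ≤ p₁ ≤ p₂ ≤ q−1 one has Σ_{γ ∈ C̄((ℤ/Nℤ)²)} φ̂_{p₁}(k+γ)·conj(φ̂_{p₂}(k+γ)) = q·δ_{p₁p₂}. -/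

import Mathlib

/-- The map on `(ℤ/Nℤ)²` induced by matrix–vector multiplication (mod `N`)
by an integer matrix `M`. -/
def matBar (N : ℕ) (M : Matrix (Fin 2) (Fin 2) ℤ) :
    (Fin 2 → ZMod N) → (Fin 2 → ZMod N) :=
  fun v => (M.map (Int.cast : ℤ → ZMod N)).mulVec v

/-- `D` is a set of coset representatives for `B̄((ℤ/Nℤ)²)` in `(ℤ/Nℤ)²`
containing `0`: it contains exactly one representative of each coset. -/
def IsDigitRep (N : ℕ) (B : Matrix (Fin 2) (Fin 2) ℤ)
    (D : Finset (Fin 2 → ZMod N)) : Prop :=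
  (0 : Fin 2 → ZMod N) ∈ D ∧
    ∀ v : Fin 2 → ZMod N, ∃! d, d ∈ D ∧ v - d ∈ Set.range (matBar N B)

/-- The translation operator `T_k` on `ℓ²(ℤ_N²)`: `(T_k f)(m) = f(m − k)`. -/
def transl (N : ℕ) (k : Fin 2 → ZMod N) (f : (Fin 2 → ZMod N) → ℂ) :
    (Fin 2 → ZMod N) → ℂ :=
  fun m => f (m - k)

/-- The discrete Fourier transform on `ℓ²(ℤ_N²)`:
`f̂(m) = Σ_s f(s)·e^{−2πi⟨m,s⟩/N}`, computed with integer lifts in the exponent. -/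
noncomputable def dft (N : ℕ) [NeZero N] (f : (Fin 2 → ZMod N) → ℂ)
    (m : Fin 2 → ZMod N) : ℂ :=
  ∑ s : Fin 2 → ZMod N, f s *
    Complex.exp (-(2 * Real.pi * Complex.I) *
      ((∑ i, ((m i).val : ℤ) * ((s i).val : ℤ) : ℤ) : ℂ) / (N : ℂ))

/-- The inner product on `ℓ²(ℤ_N²)`: `⟨f, g⟩ = Σ_n f(n)·conj(g(n))`. -/
noncomputable def ip (N : ℕ) [NeZero N] (f g : (Fin 2 → ZMod N) → ℂ) : ℂ :=
  ∑ n : Fin 2 → ZMod N, f n * (starRingEnd ℂ) (g n)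

/-- A family `b` indexed by `ι` is an orthonormal basis of `ℓ²(ℤ_N²)`:
it is orthonormal and spans the whole space. -/
def IsONB (N : ℕ) [NeZero N] {ι : Type*} [Fintype ι] [DecidableEq ι]
    (b : ι → ((Fin 2 → ZMod N) → ℂ)) : Prop :=
  (∀ i j, ip N (b i) (b j) = if i = j then 1 else 0) ∧
    Submodule.span ℂ (Set.range b) = ⊤

open Matrix

lemma matBar_intCast (N : ℕ) (M : Matrix (Fin 2) (Fin 2) ℤ) (v : Fin 2 → ℤ) :
    matBar N M (fun i => (v i : ZMod N)) = fun i => ((M *ᵥ v) i : ZMod N) := by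
  funext i
  simp [matBar, mulVec, dotProduct]

lemma matBar_add (N : ℕ) (M : Matrix (Fin 2) (Fin 2) ℤ) (u v : Fin 2 → ZMod N) :
    matBar N M (u + v) = matBar N M u + matBar N M v :=
  mulVec_add _ _ _

lemma matBar_neg (N : ℕ) (M : Matrix (Fin 2) (Fin 2) ℤ) (u : Fin 2 → ZMod N) :
    matBar N M (-u) = -matBar N M u :=
  mulVec_neg _ _

lemma matBar_sub (N : ℕ) (M : Matrix (Fin 2) (Fin 2) ℤ) (u v : Fin 2 → ZMod N) :
    matBar N M (u - v) = matBar N M u - matBar N M v :=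
  mulVec_sub _ _ _

lemma matBar_zero (N : ℕ) (M : Matrix (Fin 2) (Fin 2) ℤ) : matBar N M 0 = 0 :=
  mulVec_zero _

/-- `matBar N M` as an additive homomorphism. -/
def matBarHom (N : ℕ) (M : Matrix (Fin 2) (Fin 2) ℤ) :
    (Fin 2 → ZMod N) →+ (Fin 2 → ZMod N) where
  toFun := matBar N M
  map_zero' := matBar_zero N M
  map_add' := matBar_add N M

lemma exists_intCast_eq (N : ℕ) (u : Fin 2 → ZMod N) :
    ∃ v : Fin 2 → ℤ, (fun i => (v i : ZMod N)) = u :=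
  ⟨fun i => (u i).cast, funext fun i => ZMod.intCast_zmod_cast (u i)⟩

lemma dotProduct_matBar_transpose (N : ℕ) (M : Matrix (Fin 2) (Fin 2) ℤ)
    (n u : Fin 2 → ZMod N) : matBar N Mᵀ n ⬝ᵥ u = n ⬝ᵥ matBar N M u := by
  simp only [matBar, dotProduct_mulVec, transpose_map, mulVec_transpose]

lemma mul_eq_natCast_smul_one_symm {N : ℕ} {A B : Matrix (Fin 2) (Fin 2) ℤ} (hA : A.det ≠ 0)
    (h : A * B = (N : ℤ) • (1 : Matrix (Fin 2) (Fin 2) ℤ)) :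
    B * A = (N : ℤ) • (1 : Matrix (Fin 2) (Fin 2) ℤ) := by
  have key : A.det • (B * A) = A.det • ((N : ℤ) • (1 : Matrix (Fin 2) (Fin 2) ℤ)) := by
    calc A.det • (B * A) = A.adjugate * (A * B) * A := by
          rw [← Matrix.mul_assoc, adjugate_mul, Matrix.mul_assoc, smul_mul, Matrix.one_mul]
      _ = _ := by
          rw [h, Matrix.mul_smul, smul_mul, Matrix.mul_one, adjugate_mul, smul_comm]
  exact smul_right_injective _ hA key

lemma det_ne_zero_of_mul_eq {N : ℕ} [NeZero N] {A B : Matrix (Fin 2) (Fin 2) ℤ}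
    (h : B * A = (N : ℤ) • (1 : Matrix (Fin 2) (Fin 2) ℤ)) : B.det ≠ 0 ∧ A.det ≠ 0 := by
  have hdet := congrArg det h
  rw [det_mul, det_smul, det_one] at hdet
  have hN : (N : ℤ) ≠ 0 := by exact_mod_cast NeZero.ne N
  refine mul_ne_zero_iff.1 ?_
  rw [hdet]
  simpa using hN

lemma matBar_intCast_eq_zero_iff {N : ℕ} [NeZero N] {A B : Matrix (Fin 2) (Fin 2) ℤ}
    (h : B * A = (N : ℤ) • (1 : Matrix (Fin 2) (Fin 2) ℤ)) (v : Fin 2 → ℤ) :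
    matBar N B (fun i => (v i : ZMod N)) = 0 ↔ ∃ w, A *ᵥ w = v := by
  rw [matBar_intCast]
  constructor
  · intro hv
    have hdvd : ∀ i, ∃ c, (B *ᵥ v) i = (N : ℤ) * c := fun i =>
      (ZMod.intCast_zmod_eq_zero_iff_dvd _ N).1 (congrFun hv i)
    choose w hw using hdvd
    refine ⟨w, ?_⟩
    have : B *ᵥ (A *ᵥ w - v) = 0 := by
      rw [mulVec_sub, mulVec_mulVec, h, smul_mulVec, one_mulVec, sub_eq_zero]
      exact funext fun i => (hw i).symm
    exact sub_eq_zero.1 (eq_zero_of_mulVec_eq_zero (det_ne_zero_of_mul_eq h).1 this)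
  · rintro ⟨w, rfl⟩
    rw [mulVec_mulVec, h]
    funext i
    simp

lemma matBar_eq_zero_iff {N : ℕ} [NeZero N] {A B : Matrix (Fin 2) (Fin 2) ℤ}
    (h : B * A = (N : ℤ) • (1 : Matrix (Fin 2) (Fin 2) ℤ)) (u : Fin 2 → ZMod N) :
    matBar N B u = 0 ↔ u ∈ Set.range (matBar N A) := by
  constructor
  · obtain ⟨v, rfl⟩ := exists_intCast_eq N u
    rw [matBar_intCast_eq_zero_iff h]
    rintro ⟨w, rfl⟩
    exact ⟨_, matBar_intCast N A w⟩
  · rintro ⟨x, rfl⟩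
    obtain ⟨w, rfl⟩ := exists_intCast_eq N x
    rw [matBar_intCast N A, matBar_intCast_eq_zero_iff h]
    exact ⟨w, rfl⟩

lemma card_quotient_range_mulVecLin {A : Matrix (Fin 2) (Fin 2) ℤ} (hA : A.det ≠ 0) :
    Nat.card ((Fin 2 → ℤ) ⧸ LinearMap.range A.mulVecLin) = A.det.natAbs := by
  have hinj : Function.Injective A.mulVecLin := by
    rw [← LinearMap.ker_eq_bot, LinearMap.ker_eq_bot']
    exact fun v hv => eq_zero_of_mulVec_eq_zero hA hv
  rw [← Submodule.natAbs_det_equiv _ (LinearEquiv.ofInjective A.mulVecLin hinj),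
    ← LinearMap.det_toLin' A]
  rfl

lemma card_range_matBarHom {N : ℕ} [NeZero N] {A B : Matrix (Fin 2) (Fin 2) ℤ}
    (h : B * A = (N : ℤ) • (1 : Matrix (Fin 2) (Fin 2) ℤ)) :
    Nat.card (matBarHom N B).range = A.det.natAbs := by
  let red : (Fin 2 → ℤ) →+ (Fin 2 → ZMod N) := (Int.castAddHom (ZMod N)).compLeft (Fin 2)
  have hred : Function.Surjective red := exists_intCast_eq N
  have hrange : (matBarHom N B).range = ((matBarHom N B).comp red).range := by
    rw [AddMonoidHom.range_comp, AddMonoidHom.range_eq_top.2 hred, AddMonoidHom.range_eq_map]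
  have hker : ((matBarHom N B).comp red).ker = (LinearMap.range A.mulVecLin).toAddSubgroup := by
    ext v
    exact matBar_intCast_eq_zero_iff h v
  rw [hrange, ← AddSubgroup.index_ker, hker,
    ← card_quotient_range_mulVecLin (det_ne_zero_of_mul_eq h).2]
  rfl

lemma card_image_matBar {N : ℕ} [NeZero N] {A B : Matrix (Fin 2) (Fin 2) ℤ}
    (h : B * A = (N : ℤ) • (1 : Matrix (Fin 2) (Fin 2) ℤ)) :
    (Finset.univ.image (matBar N B)).card = A.det.natAbs := by
  rw [← card_range_matBarHom h, ← Nat.card_eq_card_toFinset (Set.range (matBar N B)) |>.trans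
    (congrArg Finset.card (Set.toFinset_range _))]
  rfl

lemma IsDigitRep.card_mul {N : ℕ} [NeZero N] {A B : Matrix (Fin 2) (Fin 2) ℤ}
    (h : B * A = (N : ℤ) • (1 : Matrix (Fin 2) (Fin 2) ℤ)) {D : Finset (Fin 2 → ZMod N)}
    (hD : IsDigitRep N B D) : D.card * A.det.natAbs = N ^ 2 := by
  have hbij : Function.Bijective
      (fun d : D => (QuotientAddGroup.mk d.1 : (Fin 2 → ZMod N) ⧸ (matBarHom N B).range)) := by
    constructor
    · intro d e hde
      have hmem := QuotientAddGroup.eq.1 hde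
      rw [neg_add_eq_sub] at hmem
      refine Subtype.ext ((hD.2 e).unique ⟨d.2, hmem⟩ ⟨e.2, 0, ?_⟩)
      rw [sub_self, matBar_zero]
    · intro x
      obtain ⟨v, rfl⟩ := QuotientAddGroup.mk_surjective x
      obtain ⟨d, ⟨hd, hvd⟩, -⟩ := hD.2 v
      refine ⟨⟨d, hd⟩, QuotientAddGroup.eq.2 ?_⟩
      rwa [neg_add_eq_sub]
  have hcard := AddSubgroup.card_eq_card_quotient_mul_card_addSubgroup (matBarHom N B).range
  rw [card_range_matBarHom h, ← Nat.card_congr (Equiv.ofBijective _ hbij)] at hcard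
  simpa using hcard.symm

lemma IsDigitRep.exists_matBar_eq {N : ℕ} [NeZero N] {A B : Matrix (Fin 2) (Fin 2) ℤ}
    (h : A * B = (N : ℤ) • (1 : Matrix (Fin 2) (Fin 2) ℤ)) {D : Finset (Fin 2 → ZMod N)}
    (hD : IsDigitRep N B D) (v : Fin 2 → ZMod N) : ∃ d ∈ D, matBar N A d = matBar N A v := by
  obtain ⟨d, ⟨hd, hvd⟩, -⟩ := hD.2 v
  refine ⟨d, hd, ?_⟩
  have := (matBar_eq_zero_iff h _).2 hvd
  rw [matBar_sub, sub_eq_zero] at this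
  exact this.symm

open ZMod in
lemma dft_eq_sum_stdAddChar {N : ℕ} [NeZero N] (f : (Fin 2 → ZMod N) → ℂ)
    (m : Fin 2 → ZMod N) : dft N f m = ∑ s, f s * stdAddChar (-(m ⬝ᵥ s)) := by
  refine Finset.sum_congr rfl fun s _ => ?_
  have hcast : -(m ⬝ᵥ s) =
      ((-(∑ i, ((m i).val : ℤ) * ((s i).val : ℤ)) : ℤ) : ZMod N) := by
    simp [dotProduct]
  rw [hcast, stdAddChar_coe]
  push_cast
  ring_nf

lemma conj_stdAddChar {N : ℕ} [NeZero N] (x : ZMod N) :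
    (starRingEnd ℂ) (ZMod.stdAddChar x) = ZMod.stdAddChar (-x) := by
  rw [ZMod.stdAddChar_apply, ZMod.stdAddChar_apply, ← Circle.coe_inv_eq_conj,
    AddChar.map_neg_eq_inv]

lemma exists_stdAddChar_dotProduct_ne_one {N : ℕ} [NeZero N] {u : Fin 2 → ZMod N}
    (hu : u ≠ 0) : ∃ n : Fin 2 → ZMod N, ZMod.stdAddChar (-(n ⬝ᵥ u)) ≠ 1 := by
  obtain ⟨i, hi⟩ := Function.ne_iff.1 hu
  refine ⟨Pi.single i 1, fun h => hi ?_⟩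
  rw [← AddChar.map_zero_eq_one (ZMod.stdAddChar (N := N))] at h
  simpa using ZMod.injective_stdAddChar h

lemma sum_stdAddChar_dotProduct_eq_zero {N : ℕ} [NeZero N] {S : Finset (Fin 2 → ZMod N)}
    {u n : Fin 2 → ZMod N} (hn : ∀ γ, n + γ ∈ S ↔ γ ∈ S)
    (hχ : ZMod.stdAddChar (-(n ⬝ᵥ u)) ≠ 1) :
    ∑ γ ∈ S, ZMod.stdAddChar (-(γ ⬝ᵥ u)) = 0 := by
  have hshift : ∑ γ ∈ S, ZMod.stdAddChar (-((n + γ) ⬝ᵥ u)) =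
      ∑ γ ∈ S, ZMod.stdAddChar (-(γ ⬝ᵥ u)) :=
    Finset.sum_equiv (Equiv.addLeft n) (fun γ => (hn γ).symm) fun _ _ => rfl
  simp only [add_dotProduct, neg_add, AddChar.map_add_eq_mul, ← Finset.mul_sum] at hshift
  by_contra hne
  exact hχ ((mul_eq_right₀ hne).1 hshift)

lemma sum_univ_stdAddChar_dotProduct {N : ℕ} [NeZero N] (u : Fin 2 → ZMod N) :
    ∑ γ, ZMod.stdAddChar (-(γ ⬝ᵥ u)) = if u = 0 then (N : ℂ) ^ 2 else 0 := by
  split_ifs with hu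
  · simp [hu]
  · obtain ⟨n, hn⟩ := exists_stdAddChar_dotProduct_ne_one hu
    exact sum_stdAddChar_dotProduct_eq_zero (by simp) hn

lemma sum_image_stdAddChar_dotProduct {N : ℕ} [NeZero N] {A B : Matrix (Fin 2) (Fin 2) ℤ}
    (hAB : A * B = (N : ℤ) • (1 : Matrix (Fin 2) (Fin 2) ℤ))
    (hBA : B * A = (N : ℤ) • (1 : Matrix (Fin 2) (Fin 2) ℤ)) (u : Fin 2 → ZMod N) :
    ∑ γ ∈ Finset.univ.image (matBar N Bᵀ), ZMod.stdAddChar (-(γ ⬝ᵥ u)) =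
      if u ∈ Finset.univ.image (matBar N A) then (A.det.natAbs : ℂ) else 0 := by
  have hmem : u ∈ Finset.univ.image (matBar N A) ↔ matBar N B u = 0 := by
    simp [matBar_eq_zero_iff hBA]
  split_ifs with hu
  · rw [hmem] at hu
    have hT : Bᵀ * Aᵀ = (N : ℤ) • (1 : Matrix (Fin 2) (Fin 2) ℤ) := by
      rw [← transpose_mul, hAB]; simp
    rw [← det_transpose A, ← card_image_matBar hT, Finset.sum_congr rfl (g := fun _ => (1 : ℂ))]
    · simp
    · intro γ hγ
      obtain ⟨n, -, rfl⟩ := Finset.mem_image.1 hγ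
      rw [dotProduct_matBar_transpose, hu, dotProduct_zero, neg_zero, AddChar.map_zero_eq_one]
  · obtain ⟨n, hn⟩ := exists_stdAddChar_dotProduct_ne_one (fun h => hu (hmem.2 h))
    rw [← dotProduct_matBar_transpose] at hn
    refine sum_stdAddChar_dotProduct_eq_zero (fun γ => ?_) hn
    simp only [Finset.mem_image, Finset.mem_univ, true_and]
    constructor
    · rintro ⟨x, hx⟩
      exact ⟨x - n, by rw [matBar_sub, hx, add_sub_cancel_left]⟩
    · rintro ⟨x, rfl⟩
      exact ⟨n + x, matBar_add _ _ _ _⟩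

lemma ip_transl_transl {N : ℕ} [NeZero N] (a b : Fin 2 → ZMod N)
    (f g : (Fin 2 → ZMod N) → ℂ) :
    ip N (transl N a f) (transl N b g) = ip N (transl N (a - b) f) g := by
  refine Fintype.sum_equiv (Equiv.subRight b) _ _ fun n => ?_
  simp [transl]

lemma ip_conj_symm {N : ℕ} [NeZero N] (f g : (Fin 2 → ZMod N) → ℂ) :
    (starRingEnd ℂ) (ip N f g) = ip N g f := by
  simp [ip, mul_comm]

lemma dft_mul_conj_dft {N : ℕ} [NeZero N] (f g : (Fin 2 → ZMod N) → ℂ)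
    (m : Fin 2 → ZMod N) :
    dft N f m * (starRingEnd ℂ) (dft N g m) =
      ∑ a, ZMod.stdAddChar (-(m ⬝ᵥ a)) * ip N (transl N (-a) f) g := by
  simp only [dft_eq_sum_stdAddChar, map_sum, map_mul, conj_stdAddChar, ip]
  rw [Finset.sum_mul_sum, Finset.sum_comm]
  simp only [Finset.mul_sum]
  rw [Finset.sum_comm (s := Finset.univ (α := Fin 2 → ZMod N)) (f := fun a n =>
    ZMod.stdAddChar (-(m ⬝ᵥ a)) * (transl N (-a) f n * (starRingEnd ℂ) (g n)))]
  refine Finset.sum_congr rfl fun t _ => ?_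
  refine Fintype.sum_equiv (Equiv.subRight t) _ _ fun s => ?_
  simp only [transl, Equiv.subRight_apply, sub_sub_cancel, dotProduct_sub,
    neg_sub]
  rw [show m ⬝ᵥ t - m ⬝ᵥ s = -(m ⬝ᵥ s) + m ⬝ᵥ t by ring, AddChar.map_add_eq_mul, neg_neg]
  ring

/-- The bracket sum over `C̄((ℤ/Nℤ)²)` is the Fourier series of the correlations of `f` and `g`
along `Ā((ℤ/Nℤ)²)`. -/
lemma sum_image_dft_mul_conj_dft {N : ℕ} [NeZero N] {A B : Matrix (Fin 2) (Fin 2) ℤ}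
    (hAB : A * B = (N : ℤ) • (1 : Matrix (Fin 2) (Fin 2) ℤ))
    (hBA : B * A = (N : ℤ) • (1 : Matrix (Fin 2) (Fin 2) ℤ))
    (f g : (Fin 2 → ZMod N) → ℂ) (k : Fin 2 → ZMod N) :
    ∑ γ ∈ Finset.univ.image (matBar N Bᵀ),
        dft N f (k + γ) * (starRingEnd ℂ) (dft N g (k + γ)) =
      A.det.natAbs * ∑ a ∈ Finset.univ.image (matBar N A),
        ZMod.stdAddChar (-(k ⬝ᵥ a)) * ip N (transl N (-a) f) g := by
  simp only [dft_mul_conj_dft, add_dotProduct, neg_add, AddChar.map_add_eq_mul]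
  rw [Finset.sum_comm]
  simp only [mul_comm _ (ip N _ _)]
  simp only [← mul_assoc, ← Finset.mul_sum, sum_image_stdAddChar_dotProduct hAB hBA,
    mul_ite, mul_zero, Finset.sum_ite_mem, Finset.univ_inter]
  rw [Finset.mul_sum]
  exact Finset.sum_congr rfl fun a _ => by ring

/-- A constant Fourier series has its only nonzero coefficient at `0`. -/
lemma coeff_eq_of_sum_stdAddChar_eq_const {N : ℕ} [NeZero N] {S : Finset (Fin 2 → ZMod N)}
    {R : (Fin 2 → ZMod N) → ℂ} {c : ℂ}
    (h : ∀ k : Fin 2 → ZMod N, ∑ a ∈ S, ZMod.stdAddChar (-(k ⬝ᵥ a)) * R a = c)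
    {b : Fin 2 → ZMod N} (hb : b ∈ S) : R b = if b = 0 then c else 0 := by
  have hN : (N : ℂ) ^ 2 ≠ 0 := pow_ne_zero 2 (NeZero.ne _)
  have hleft : ∑ k : Fin 2 → ZMod N, ZMod.stdAddChar (-(k ⬝ᵥ -b)) *
      ∑ a ∈ S, ZMod.stdAddChar (-(k ⬝ᵥ a)) * R a = (N : ℂ) ^ 2 * R b := by
    simp only [Finset.mul_sum, ← mul_assoc, ← AddChar.map_add_eq_mul, ← neg_add,
      ← dotProduct_add]
    rw [Finset.sum_comm]
    simp only [← Finset.sum_mul, sum_univ_stdAddChar_dotProduct, neg_add_eq_zero, ite_mul,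
      zero_mul, Finset.sum_ite_eq, hb, if_true]
  simp only [h, ← Finset.sum_mul, sum_univ_stdAddChar_dotProduct, neg_eq_zero] at hleft
  refine mul_left_cancel₀ hN ?_
  rw [← hleft]
  split_ifs <;> simp

lemma span_eq_top_of_ip_eq {N : ℕ} [NeZero N] {ι : Type*} [Fintype ι] [DecidableEq ι]
    {b : ι → ((Fin 2 → ZMod N) → ℂ)}
    (hb : ∀ i j, ip N (b i) (b j) = if i = j then 1 else 0)
    (hcard : Fintype.card ι = N ^ 2) : Submodule.span ℂ (Set.range b) = ⊤ := by
  have hli : LinearIndependent ℂ b := by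
    rw [Fintype.linearIndependent_iff]
    intro c hc j
    have hip : ip N (∑ i, c i • b i) (b j) = ∑ i, c i * ip N (b i) (b j) := by
      simp only [ip, Finset.sum_apply, Pi.smul_apply, smul_eq_mul, Finset.sum_mul,
        Finset.mul_sum, mul_assoc]
      exact Finset.sum_comm
    have hzero : ip N 0 (b j) = 0 := by simp [ip]
    simpa [hc, hzero, hb] using hip.symm
  refine hli.span_eq_top_of_card_eq_finrank' ?_
  simp [hcard]

/-- Let `q = |det A| ≥ 2`, let `𝔇` be a digit set for `B`, and
`Φ = {φ₀, …, φ_{q−1}} ⊆ ℓ²(ℤ_N²)`.  Then `𝔅(Φ) = {T_{Āk} φ_p : k ∈ 𝔇, 0 ≤ p ≤ q−1}`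
is an orthonormal basis of `ℓ²(ℤ_N²)` if and only if for every `k ∈ (ℤ/Nℤ)²` and
all `p₁ ≤ p₂` one has
`Σ_{γ ∈ C̄((ℤ/Nℤ)²)} φ̂_{p₁}(k+γ)·conj(φ̂_{p₂}(k+γ)) = q·δ_{p₁p₂}`,
where `C = Bᵀ`. -/
theorem onws_characterization (N : ℕ) [NeZero N]
    (A B : Matrix (Fin 2) (Fin 2) ℤ) (hA : A.det ≠ 0)
    (hB : A * B = (N : ℤ) • (1 : Matrix (Fin 2) (Fin 2) ℤ))
    (hq : 2 ≤ A.det.natAbs)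
    (D : Finset (Fin 2 → ZMod N)) (hD : IsDigitRep N B D)
    (hinj : Set.InjOn (matBar N A) D)
    (φ : Fin (A.det.natAbs) → ((Fin 2 → ZMod N) → ℂ)) :
    IsONB N (fun kp : ↥D × Fin (A.det.natAbs) =>
        transl N (matBar N A ↑kp.1) (φ kp.2)) ↔
      ∀ k : Fin 2 → ZMod N, ∀ p₁ p₂ : Fin (A.det.natAbs), p₁ ≤ p₂ →
        ∑ γ ∈ Finset.univ.image (matBar N B.transpose),
            dft N (φ p₁) (k + γ) * (starRingEnd ℂ) (dft N (φ p₂) (k + γ)) =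
          if p₁ = p₂ then (A.det.natAbs : ℂ) else 0 := by
  have hBA := mul_eq_natCast_smul_one_symm hA hB
  have hq0 : (A.det.natAbs : ℂ) ≠ 0 := by exact_mod_cast Int.natAbs_ne_zero.2 hA
  simp only [sum_image_dft_mul_conj_dft hB hBA]
  constructor
  · rintro ⟨hon, -⟩ k p₁ p₂ -
    have hcorr : ∀ a ∈ Finset.univ.image (matBar N A),
        ZMod.stdAddChar (-(k ⬝ᵥ a)) * ip N (transl N (-a) (φ p₁)) (φ p₂) =
          if a = 0 then (if p₁ = p₂ then 1 else 0) else 0 := by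
      intro a ha
      obtain ⟨v, -, rfl⟩ := Finset.mem_image.1 ha
      obtain ⟨d, hd, hdv⟩ := hD.exists_matBar_eq hB (-v)
      have hd0 : d = 0 ↔ matBar N A v = 0 := by
        rw [← hinj.eq_iff hd hD.1, hdv, matBar_neg, matBar_zero, neg_eq_zero]
      have hip := hon (⟨d, hd⟩, p₁) (⟨0, hD.1⟩, p₂)
      simp only [ip_transl_transl, hdv, matBar_neg, matBar_zero, sub_zero, Prod.mk.injEq,
        Subtype.mk.injEq, hd0] at hip
      rw [hip]
      by_cases hv : matBar N A v = 0 <;> simp [hv]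
    have hzero : (0 : Fin 2 → ZMod N) ∈ Finset.univ.image (matBar N A) :=
      Finset.mem_image.2 ⟨0, Finset.mem_univ _, matBar_zero N A⟩
    rw [Finset.sum_congr rfl hcorr, Finset.sum_ite_eq', if_pos hzero]
    split_ifs <;> simp
  · intro h
    have hle : ∀ p₁ p₂, p₁ ≤ p₂ → ∀ a ∈ Finset.univ.image (matBar N A),
        ip N (transl N (-a) (φ p₁)) (φ p₂) =
          if a = 0 then (if p₁ = p₂ then 1 else 0) else 0 := by
      intro p₁ p₂ hp a ha
      refine coeff_eq_of_sum_stdAddChar_eq_const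
        (R := fun a => ip N (transl N (-a) (φ p₁)) (φ p₂)) (fun k => ?_) ha
      refine mul_left_cancel₀ hq0 ((h k p₁ p₂ hp).trans ?_)
      split_ifs <;> simp
    have hle' : ∀ d ∈ D, ∀ e ∈ D, ∀ p₁ p₂, p₁ ≤ p₂ →
        ip N (transl N (matBar N A d) (φ p₁)) (transl N (matBar N A e) (φ p₂)) =
          if d = e ∧ p₁ = p₂ then 1 else 0 := by
      intro d hd e he p₁ p₂ hp
      have hval := hle p₁ p₂ hp (matBar N A (e - d))
        (Finset.mem_image_of_mem _ (Finset.mem_univ _))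
      rw [matBar_sub, neg_sub] at hval
      rw [ip_transl_transl, hval, ite_and]
      simp only [sub_eq_zero, hinj.eq_iff he hd, eq_comm (a := e)]
    have hon : ∀ i j : ↥D × Fin (A.det.natAbs),
        ip N (transl N (matBar N A ↑i.1) (φ i.2)) (transl N (matBar N A ↑j.1) (φ j.2)) =
          if i = j then 1 else 0 := by
      rintro ⟨⟨d, hd⟩, p₁⟩ ⟨⟨e, he⟩, p₂⟩
      simp only [Prod.mk.injEq, Subtype.mk.injEq]
      rcases le_total p₁ p₂ with hp | hp
      · exact hle' d hd e he p₁ p₂ hp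
      · rw [← ip_conj_symm, hle' e he d hd p₂ p₁ hp]
        simp only [eq_comm (a := e), eq_comm (a := p₂)]
        split_ifs <;> simp
    refine ⟨hon, span_eq_top_of_ip_eq hon ?_⟩
    simpa using hD.card_mul hBA
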